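/- arXiv:1006.1372 — 2 statements merged into one kernel-verified Lean document; each statement's English description precedes it below -/
import Mathlib

section
/- Let a = 2π/(ln 2 − γ), where γ is the Euler–Mascheroni constant, let c < 0 and θ₀ = 0. Then there exist C > 0 and ε₀ > 0 such that for all 0 < ε < ε₀ the equation Log(1−z)/(4π) − 1/a = −1/(a + cε − ε²·(Log z/(4π) − i/4 − 1/a)), with Log the principal complex logarithm, has a solution E_ε^r with Im(E_ε^r) < 0 satisfying |Re(E_ε^r) − 4π|c|ε/a²| ≤ C·ε²·|ln ε|, and for every δ > 0 there is ε₁ > 0 such that for 0 < ε < ε₁, |Im(E_ε^r) + πε²/a²| ≤ δε². -/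
open Complex

/-!
Solving `Log(1 - z)/(4π) - 1/a = -1/(a + t)` for `z` near `t = 0` gives `z = P(t)` with `P`
analytic, real on the real axis, `P(0) = 0` and `P'(0) = -4π/a²`, so a resonance is a fixed point of
`z ↦ P(c ε - ε² g(z))`, where `g(z) = Log z/(4π) - i/4 - 1/a`. Substituting `z = ε u` turns
`ε² Log z` into `ε (ε ln ε + ε Log u)`; after division by `ε` the equation for `u` is analytic in
`ε`, `s = ε ln ε` and `u`, and at `ε = s = 0` it reads `u = P'(0) c`. The implicit function theorem
gives `u = P'(0) c + O(|ε| + |s|)`, which is the expansion of the real part. As `P'(0) c > 0`, the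
argument of `z` tends to `0`, so `c ε - ε² g(z)` has imaginary part `ε²/4 + o(ε²)`, and since `P` is
real on the real axis it multiplies small imaginary parts by `P'(0) + o(1)`.
-/

open Filter Asymptotics Topology

section ImplicitFixedPoint

variable {𝕜 X Y : Type*} [NontriviallyNormedField 𝕜]
  [NormedAddCommGroup X] [NormedSpace 𝕜 X] [CompleteSpace X]
  [NormedAddCommGroup Y] [NormedSpace 𝕜 Y] [CompleteSpace Y]

theorem exists_eventually_fixedPoint_isBigO_sub {G : X × Y → Y} {G' : X × Y →L[𝕜] Y}
    {x₀ : X} {y₀ : Y} (hG : HasStrictFDerivAt G G' (x₀, y₀)) (hy₀ : G (x₀, y₀) = y₀)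
    (hinv : (G' ∘L .inr 𝕜 X Y - .id 𝕜 Y).IsInvertible) :
    ∃ ψ : X → Y, (∀ᶠ x in 𝓝 x₀, G (x, ψ x) = ψ x) ∧
      (fun x => ψ x - y₀) =O[𝓝 x₀] fun x => x - x₀ := by
  have hF : HasStrictFDerivAt (fun v : X × Y => G v - v.2) (G' - .snd 𝕜 X Y) (x₀, y₀) :=
    hG.sub hasStrictFDerivAt_snd
  have hF₂ : ((G' - .snd 𝕜 X Y) ∘L .inr 𝕜 X Y).IsInvertible := by
    rwa [ContinuousLinearMap.sub_comp, ContinuousLinearMap.snd_comp_inr]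
  have hψ₀ : hF.implicitFunctionOfProdDomain hF₂ x₀ = y₀ :=
    (hF.eventually_apply_eq_iff_implicitFunctionOfProdDomain hF₂).self_of_nhds.mp rfl
  refine ⟨hF.implicitFunctionOfProdDomain hF₂, ?_, ?_⟩
  · filter_upwards [hF.eventually_apply_implicitFunctionOfProdDomain hF₂] with x hx
    exact sub_eq_zero.mp (hx.trans (sub_eq_zero.mpr hy₀))
  · simpa only [hψ₀] using
      (hF.hasStrictFDerivAt_implicitFunctionOfProdDomain hF₂).hasFDerivAt.isBigO_sub

end ImplicitFixedPoint

theorem im_sub_mul_im_isLittleO_im {P : ℂ → ℂ} {d x₀ : ℝ}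
    (hP : HasStrictDerivAt P (d : ℂ) x₀) (hreal : ∀ᶠ x : ℝ in 𝓝 x₀, (P x).im = 0) :
    (fun w : ℂ => (P w).im - d * w.im) =o[𝓝 (x₀ : ℂ)] fun w => w.im := by
  have hre : Tendsto re (𝓝 (x₀ : ℂ)) (𝓝 x₀) := continuous_re.tendsto' _ _ (ofReal_re x₀)
  have hpair : Tendsto (fun w : ℂ => (w, (w.re : ℂ))) (𝓝 (x₀ : ℂ)) (𝓝 ((x₀ : ℂ), (x₀ : ℂ))) :=
    tendsto_id.prodMk_nhds ((continuous_ofReal.tendsto x₀).comp hre)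
  have hincr : (fun w : ℂ => P w - P w.re - (w - w.re) * d) =o[𝓝 (x₀ : ℂ)] fun w => w - w.re :=
    hP.hasStrictFDerivAt.isLittleO.comp_tendsto hpair
  have him : (fun w : ℂ => w - w.re) =O[𝓝 (x₀ : ℂ)] fun w => w.im :=
    .of_bound' <| .of_forall fun w => by
      rw [sub_eq_of_eq_add' (re_add_im w).symm, norm_mul, norm_I, mul_one, norm_real]
  refine (IsBigO.of_bound' ?_).trans_isLittleO (hincr.trans_isBigO him)
  filter_upwards [hre.eventually hreal] with w hw
  convert abs_im_le_norm (P w - P w.re - (w - w.re) * d) using 1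
  simp [hw, mul_comm]

theorem tendsto_arg_of_sub_mul_isLittleO {α : Type*} {l : Filter α} {E : α → ℂ} {r : α → ℝ} {k : ℂ}
    (hk : k ∈ slitPlane) (hr : ∀ᶠ x in l, 0 < r x)
    (hE : (fun x => E x - k * r x) =o[l] r) :
    Tendsto (fun x => arg (E x)) l (𝓝 (arg k)) := by
  have hdiv : Tendsto (fun x => (E x - k * r x) / r x) l (𝓝 0) :=
    IsLittleO.tendsto_div_nhds_zero (isLittleO_ofReal_right.mpr hE)
  have hquot : Tendsto (fun x => (E x - k * r x) / r x + k) l (𝓝 k) := by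
    simpa using hdiv.add_const k
  refine ((continuousAt_arg hk).tendsto.comp hquot).congr' ?_
  filter_upwards [hr] with x hx
  have hx' : (r x : ℂ) ≠ 0 := ofReal_ne_zero.mpr hx.ne'
  rw [Function.comp_apply, ← arg_real_mul _ hx]
  congr 1
  field_simp
  ring

theorem eventually_neg_of_add_mul_isLittleO {α : Type*} {l : Filter α} {f r : α → ℝ} {κ : ℝ}
    (hκ : 0 < κ) (hr : ∀ᶠ x in l, 0 < r x) (hf : (fun x => f x + κ * r x) =o[l] r) :
    ∀ᶠ x in l, f x < 0 := by
  filter_upwards [hf.bound (half_pos hκ), hr] with x hx hrx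
  rw [Real.norm_of_nonneg hrx.le] at hx
  linarith [Real.le_norm_self (f x + κ * r x), mul_pos hκ hrx]

theorem tendsto_mul_log_nhdsGT_zero :
    Tendsto (fun ε : ℝ => ε * Real.log ε) (𝓝[>] 0) (𝓝 0) :=
  (Real.continuous_mul_log.tendsto' 0 0 (zero_mul _)).mono_left nhdsWithin_le_nhds

theorem prodMk_mul_log_isBigO_nhdsGT_zero :
    (fun ε : ℝ => ((ε : ℂ), ((ε * Real.log ε : ℝ) : ℂ))) =O[𝓝[>] 0] fun ε => ε * Real.log ε := by
  have hone : (fun _ : ℝ => (1 : ℝ)) =O[𝓝[>] 0] Real.log :=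
    ((isLittleO_one_left_iff ℝ).mpr
      (tendsto_abs_atBot_atTop.comp Real.tendsto_log_nhdsGT_zero)).isBigO
  have hid : (fun ε : ℝ => ε) =O[𝓝[>] 0] fun ε => ε * Real.log ε := by
    simpa only [mul_one] using (isBigO_refl (fun ε : ℝ => ε) _).mul hone
  exact (isBigO_ofReal_left.mpr hid).prod_left (isBigO_ofReal_left.mpr (isBigO_refl _ _))

theorem sq_mul_log_isLittleO_nhdsGT_zero :
    (fun ε : ℝ => ε ^ 2 * Real.log ε) =o[𝓝[>] 0] fun ε => ε := by
  have hone := (isLittleO_one_iff ℝ).mpr tendsto_mul_log_nhdsGT_zero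
  simpa [sq, mul_assoc] using (isBigO_refl (fun ε : ℝ => ε) (𝓝[>] 0)).mul_isLittleO hone

theorem apply_mul_eq_mul_mul_dslope {𝕜 : Type*} [NontriviallyNormedField 𝕜] {P : 𝕜 → 𝕜}
    (hP0 : P 0 = 0) (e t : 𝕜) :
    P (e * t) = e * (t * dslope P 0 (e * t)) := by
  have h := sub_smul_dslope P 0 (e * t)
  rw [hP0, sub_zero, sub_zero, smul_eq_mul] at h
  rw [← h, mul_assoc]

section CouplingShift

/-- The increment `c ε - ε² g(z)` of the coupling constant `a` in the resolvent denominator, for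
`g(z) = β Log z + m`. -/
noncomputable def couplingShift (c β m : ℂ) (ε : ℝ) (z : ℂ) : ℂ :=
  c * ε - ε ^ 2 * (β * log z + m)

/-- The quotient `couplingShift c β m ε (ε u) / ε`, as a function of `((ε, s), u)` where `s` stands
for `ε ln ε`: in these variables it is analytic at `ε = 0`. -/
noncomputable def rescaledShift (c β m : ℂ) (v : (ℂ × ℂ) × ℂ) : ℂ :=
  c - (β * v.1.2 + v.1.1 * (β * log v.2 + m))

variable {c β m : ℂ}

theorem couplingShift_ofReal_mul {ε : ℝ} (hε : 0 < ε) {u : ℂ} (hu : u ≠ 0) :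
    couplingShift c β m ε (ε * u) =
      ε * rescaledShift c β m (((ε : ℂ), ((ε * Real.log ε : ℝ) : ℂ)), u) := by
  simp only [couplingShift, rescaledShift, log_ofReal_mul hε hu]
  push_cast
  ring

theorem analyticAt_rescaledShift {v : (ℂ × ℂ) × ℂ} (hv : v.2 ∈ slitPlane) :
    AnalyticAt ℂ (rescaledShift c β m) v := by
  have hε : AnalyticAt ℂ (fun v : (ℂ × ℂ) × ℂ => v.1.1) v := analyticAt_fst.comp analyticAt_fst
  have hs : AnalyticAt ℂ (fun v : (ℂ × ℂ) × ℂ => v.1.2) v := analyticAt_snd.comp analyticAt_fst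
  have hlog : AnalyticAt ℂ (fun v : (ℂ × ℂ) × ℂ => log v.2) v := analyticAt_snd.clog hv
  unfold rescaledShift
  fun_prop

theorem rescaledShift_zero (u : ℂ) : rescaledShift c β m (0, u) = c := by
  simp [rescaledShift]

theorem couplingShift_im (c β : ℝ) (m : ℂ) (ε : ℝ) (z : ℂ) :
    (couplingShift c β m ε z).im = -(ε ^ 2 * (β * arg z + m.im)) := by
  simp [couplingShift, ← ofReal_pow, ← ofReal_mul, log_im]

variable {P : ℂ → ℂ}

theorem exists_eventually_rescaledShift_mul_dslope_eq (hP : AnalyticAt ℂ P 0)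
    (hk : deriv P 0 * c ∈ slitPlane) :
    ∃ ψ : ℂ × ℂ → ℂ,
      (∀ᶠ p in 𝓝 0, rescaledShift c β m (p, ψ p) *
        dslope P 0 (p.1 * rescaledShift c β m (p, ψ p)) = ψ p) ∧
      (fun p => ψ p - deriv P 0 * c) =O[𝓝 0] fun p => p := by
  set G : (ℂ × ℂ) × ℂ → ℂ := fun v =>
    rescaledShift c β m v * dslope P 0 (v.1.1 * rescaledShift c β m v)
  have hG₀ (u : ℂ) : G (0, u) = deriv P 0 * c := by
    simp [G, rescaledShift_zero, mul_comm]
  have hslope : AnalyticAt ℂ (dslope P 0) 0 :=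
    let ⟨_, hp⟩ := hP
    ⟨_, hp.has_fpower_series_dslope_fslope⟩
  have hG : AnalyticAt ℂ G (0, deriv P 0 * c) := by
    have hτ : AnalyticAt ℂ (rescaledShift c β m) (0, deriv P 0 * c) := analyticAt_rescaledShift hk
    have hε : AnalyticAt ℂ (fun v : (ℂ × ℂ) × ℂ => v.1.1) (0, deriv P 0 * c) :=
      analyticAt_fst.comp analyticAt_fst
    exact hτ.mul (hslope.fun_comp_of_eq (hε.mul hτ) (zero_mul _))
  have hG₂ : fderiv ℂ G (0, deriv P 0 * c) ∘L .inr ℂ (ℂ × ℂ) ℂ = 0 := by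
    refine HasFDerivAt.unique (f := fun u => G (0, u)) (x := deriv P 0 * c)
      (hG.differentiableAt.hasFDerivAt.comp _ (hasFDerivAt_prodMk_right _ _)) ?_
    simpa only [hG₀] using hasFDerivAt_const (deriv P 0 * c) (deriv P 0 * c)
  have hinv : (fderiv ℂ G (0, deriv P 0 * c) ∘L .inr ℂ (ℂ × ℂ) ℂ - .id ℂ ℂ).IsInvertible := by
    rw [hG₂, zero_sub]
    exact ⟨.neg ℂ, by ext; simp⟩
  simpa only [sub_zero] using
    exists_eventually_fixedPoint_isBigO_sub hG.hasStrictFDerivAt (hG₀ _) hinv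

theorem exists_eventually_apply_couplingShift_eq (hP : AnalyticAt ℂ P 0) (hP0 : P 0 = 0)
    (hk : deriv P 0 * c ∈ slitPlane) :
    ∃ E : ℝ → ℂ,
      (∀ᶠ ε in 𝓝[>] 0, P (couplingShift c β m ε (E ε)) = E ε) ∧
      Tendsto (fun ε => couplingShift c β m ε (E ε)) (𝓝[>] 0) (𝓝 0) ∧
      (fun ε => E ε - deriv P 0 * c * ε) =O[𝓝[>] 0] fun ε => ε ^ 2 * Real.log ε := by
  obtain ⟨ψ, hψ, hψO⟩ := exists_eventually_rescaledShift_mul_dslope_eq (β := β) (m := m) hP hk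
  set p : ℝ → ℂ × ℂ := fun ε => (ε, (ε * Real.log ε : ℝ))
  have hpO : p =O[𝓝[>] 0] fun ε => ε * Real.log ε := prodMk_mul_log_isBigO_nhdsGT_zero
  have hp₀ : Tendsto p (𝓝[>] 0) (𝓝 0) := hpO.trans_tendsto tendsto_mul_log_nhdsGT_zero
  have hu : Tendsto (fun ε => ψ (p ε)) (𝓝[>] 0) (𝓝 (deriv P 0 * c)) :=
    tendsto_sub_nhds_zero_iff.mp ((hψO.trans_tendsto tendsto_id).comp hp₀)
  have hshift : ∀ᶠ ε in 𝓝[>] (0 : ℝ), couplingShift c β m ε (ε * ψ (p ε)) =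
      ε * rescaledShift c β m (p ε, ψ (p ε)) := by
    filter_upwards [self_mem_nhdsWithin, hu.eventually_ne (slitPlane_ne_zero hk)] with ε hε hne
    exact couplingShift_ofReal_mul hε hne
  refine ⟨fun ε => ε * ψ (p ε), ?_, ?_, ?_⟩
  · filter_upwards [hshift, hp₀.eventually hψ] with ε hε hfix
    rw [hε, apply_mul_eq_mul_mul_dslope hP0]
    exact congrArg _ hfix
  · have hτ : Tendsto (fun ε => rescaledShift c β m (p ε, ψ (p ε))) (𝓝[>] 0) (𝓝 c) := by
      simpa only [rescaledShift_zero, Function.comp_def] using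
        (analyticAt_rescaledShift hk).continuousAt.tendsto.comp (hp₀.prodMk_nhds hu)
    simpa only [Prod.fst_zero, zero_mul] using (hp₀.fst_nhds.mul hτ).congr'
      (hshift.mono fun _ h => h.symm)
  · have hO := (isBigO_ofReal_left.mpr (isBigO_refl (fun ε : ℝ => ε) (𝓝[>] 0))).mul
      ((hψO.comp_tendsto hp₀).trans hpO)
    refine hO.congr (fun ε => ?_) fun ε => ?_
    · simp only [Function.comp_apply]
      ring
    · ring

theorem im_add_mul_sq_isLittleO_of_fixedPoint {c β d : ℝ} {E : ℝ → ℂ}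
    (hP : HasStrictDerivAt P (d : ℂ) 0)
    (hreal : ∀ᶠ x : ℝ in 𝓝 0, (P x).im = 0)
    (hE : ∀ᶠ ε in 𝓝[>] 0, P (couplingShift c β m ε (E ε)) = E ε)
    (hshift : Tendsto (fun ε => couplingShift c β m ε (E ε)) (𝓝[>] 0) (𝓝 0))
    (harg : Tendsto (fun ε => arg (E ε)) (𝓝[>] 0) (𝓝 0)) :
    (fun ε => (E ε).im + d * m.im * ε ^ 2) =o[𝓝[>] 0] fun ε => ε ^ 2 := by
  set w : ℝ → ℂ := fun ε => couplingShift c β m ε (E ε)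
  have hwim (ε : ℝ) : (w ε).im = -(β * arg (E ε) + m.im) * ε ^ 2 := by
    rw [couplingShift_im]
    ring
  have hwO : (fun ε => (w ε).im) =O[𝓝[>] 0] fun ε : ℝ => ε ^ 2 := by
    have hbdd := ((harg.const_mul β).add_const m.im).neg.isBigO_one ℝ
    simpa only [hwim, one_mul] using hbdd.mul (isBigO_refl (fun ε : ℝ => ε ^ 2) _)
  have hlin : (fun ε => (P (w ε)).im - d * (w ε).im) =o[𝓝[>] 0] fun ε : ℝ => ε ^ 2 :=
    ((im_sub_mul_im_isLittleO_im (x₀ := 0) (by simpa using hP) hreal).comp_tendsto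
      (by simpa using hshift)).trans_isBigO hwO
  have hargO : (fun ε => d * β * arg (E ε) * ε ^ 2) =o[𝓝[>] 0] fun ε : ℝ => ε ^ 2 := by
    have hone : (fun ε => d * β * arg (E ε)) =o[𝓝[>] 0] fun _ => (1 : ℝ) :=
      (isLittleO_one_iff ℝ).mpr (by simpa using harg.const_mul (d * β))
    simpa only [one_mul] using hone.mul_isBigO (isBigO_refl (fun ε : ℝ => ε ^ 2) _)
  refine (hlin.sub hargO).congr' ?_ .rfl
  filter_upwards [hE] with ε hε
  rw [hε, hwim]
  ring

end CouplingShift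

section ResonanceMap

/-- The local solution `z = 1 - exp (4π (1/a - 1/(a + t)))` of `Log(1 - z)/(4π) - 1/a = -1/(a + t)`:
resonances are the fixed points of `resonanceMap a` composed with the coupling shift. -/
noncomputable def resonanceMap (a t : ℂ) : ℂ :=
  1 - exp (4 * Real.pi * t / (a * (a + t)))

variable {a : ℂ}

theorem resonanceMap_zero : resonanceMap a 0 = 0 := by
  simp [resonanceMap]

theorem analyticAt_resonanceMap (ha : a ≠ 0) : AnalyticAt ℂ (resonanceMap a) 0 := by
  unfold resonanceMap
  fun_prop (disch := simpa using ha)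

theorem hasDerivAt_resonanceMap (ha : a ≠ 0) :
    HasDerivAt (resonanceMap a) (-(4 * Real.pi / a ^ 2)) 0 := by
  have hnum : HasDerivAt (fun t : ℂ => 4 * Real.pi * t) (4 * Real.pi * 1) 0 :=
    (hasDerivAt_id (0 : ℂ)).const_mul _
  have hden : HasDerivAt (fun t : ℂ => a * (a + t)) (a * 1) 0 :=
    ((hasDerivAt_id (0 : ℂ)).const_add a).const_mul a
  refine ((hnum.div hden (by simpa using ha)).cexp.const_sub 1).congr_deriv ?_
  simp only [Pi.div_apply, mul_zero, add_zero, zero_div, exp_zero, mul_one, zero_mul, sub_zero,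
    one_mul, neg_inj]
  field_simp

theorem resonanceMap_ofReal_im (a x : ℝ) : (resonanceMap a x).im = 0 := by
  rw [resonanceMap]
  norm_cast

theorem eventually_log_one_sub_resonanceMap (ha : a ≠ 0) :
    ∀ᶠ t in 𝓝 0, log (1 - resonanceMap a t) / (4 * Real.pi) - 1 / a = -(1 / (a + t)) := by
  have hexp : Tendsto (fun t : ℂ => 4 * Real.pi * t / (a * (a + t))) (𝓝 0) (𝓝 0) := by
    have hcont : ContinuousAt (fun t : ℂ => 4 * Real.pi * t / (a * (a + t))) 0 := by
      fun_prop (disch := simpa using ha)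
    simpa using hcont.tendsto
  have hsum : ∀ᶠ t in 𝓝 (0 : ℂ), a + t ≠ 0 :=
    ContinuousAt.eventually_ne (by fun_prop) (by simpa using ha)
  have him : ∀ᶠ t in 𝓝 (0 : ℂ), (4 * Real.pi * t / (a * (a + t))).im ∈ Set.Ioo (-Real.pi) Real.pi :=
    ((continuous_im.tendsto' 0 0 zero_im).comp hexp).eventually_mem
      (Ioo_mem_nhds (neg_neg_of_pos Real.pi_pos) Real.pi_pos)
  filter_upwards [him, hsum] with t ht hat
  have hπ : (Real.pi : ℂ) ≠ 0 := ofReal_ne_zero.mpr Real.pi_ne_zero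
  rw [resonanceMap, sub_sub_cancel, log_exp ht.1 ht.2.le]
  field_simp
  ring

end ResonanceMap

theorem exists_resonance_asymptotics {a c : ℝ} (ha : a ≠ 0) (hc : c < 0) :
    ∃ E : ℝ → ℂ,
      (∀ᶠ ε : ℝ in 𝓝[>] 0, log (1 - E ε) / (4 * Real.pi) - 1 / a =
        -(1 / (a + c * ε - ε ^ 2 * (log (E ε) / (4 * Real.pi) - I / 4 - 1 / a)))) ∧
      (fun ε => (E ε).re - 4 * Real.pi * |c| * ε / a ^ 2) =O[𝓝[>] 0]
        (fun ε => ε ^ 2 * Real.log ε) ∧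
      (fun ε => (E ε).im + Real.pi * ε ^ 2 / a ^ 2) =o[𝓝[>] 0] fun ε => ε ^ 2 := by
  have haC : (a : ℂ) ≠ 0 := ofReal_ne_zero.mpr ha
  set d : ℝ := -(4 * Real.pi / a ^ 2) with hd
  have hderiv : deriv (resonanceMap a) 0 = d := by
    rw [(hasDerivAt_resonanceMap haC).deriv, hd]
    push_cast
    rfl
  have hdc : 0 < d * c := mul_pos_of_neg_of_neg (neg_neg_of_pos (by positivity)) hc
  have hk : ((d : ℂ) * c) ∈ slitPlane := by exact_mod_cast ofReal_mem_slitPlane.mpr hdc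
  obtain ⟨E, hfix, hshift, hO⟩ := exists_eventually_apply_couplingShift_eq
    (β := ((1 / (4 * Real.pi) : ℝ) : ℂ)) (m := -I / 4 - 1 / a)
    (analyticAt_resonanceMap haC) resonanceMap_zero (hderiv ▸ hk)
  rw [hderiv] at hO
  refine ⟨E, ?_, ?_, ?_⟩
  · filter_upwards [hfix, hshift.eventually (eventually_log_one_sub_resonanceMap haC)]
      with ε hE hlog
    rw [hE] at hlog
    rw [hlog, couplingShift]
    push_cast
    ring
  · have hcoeff (ε : ℝ) : 4 * Real.pi * |c| * ε / a ^ 2 = (d * c * ε : ℂ).re := by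
      rw [← ofReal_mul, ← ofReal_mul, ofReal_re, hd, abs_of_neg hc]
      ring
    simp only [hcoeff, ← sub_re]
    exact (IsBigO.of_norm_le fun ε => abs_re_le_norm _).trans hO.norm_left
  · have harg := tendsto_arg_of_sub_mul_isLittleO hk self_mem_nhdsWithin
      (hO.trans_isLittleO sq_mul_log_isLittleO_nhdsGT_zero)
    rw [← ofReal_mul, arg_ofReal_of_nonneg hdc.le] at harg
    have hP := (analyticAt_resonanceMap haC).hasStrictDerivAt
    rw [hderiv] at hP
    have hm : (-I / 4 - 1 / a : ℂ).im = -(1 / 4) := by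
      simp [← ofReal_inv, neg_div]
    refine (im_add_mul_sq_isLittleO_of_fixedPoint hP (.of_forall (resonanceMap_ofReal_im a))
      hfix hshift harg).congr_left fun ε => ?_
    rw [hm, hd]
    ring

theorem resonance_d2_theta0_zero_general (a c : ℝ) (ha : a ≠ 0) (hc : c < 0) :
    ∃ C > (0 : ℝ), ∃ ε₀ > (0 : ℝ), ∃ E : ℝ → ℂ,
      (∀ ε : ℝ, 0 < ε → ε < ε₀ →
        Complex.log (1 - E ε) / (4 * Real.pi) - ((1 / a : ℝ) : ℂ) =
          -(1 / (((a + c * ε : ℝ) : ℂ) -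
            ((ε : ℂ)) ^ 2 *
              (Complex.log (E ε) / (4 * Real.pi) - Complex.I / 4 - ((1 / a : ℝ) : ℂ)))) ∧
        (E ε).im < 0 ∧
        |(E ε).re - 4 * Real.pi * |c| * ε / a ^ 2| ≤ C * ε ^ 2 * |Real.log ε|) ∧
      (∀ δ > (0 : ℝ), ∃ ε₁ > (0 : ℝ), ∀ ε : ℝ, 0 < ε → ε < ε₁ → ε < ε₀ →
        |(E ε).im + Real.pi * ε ^ 2 / a ^ 2| ≤ δ * ε ^ 2) := by
  obtain ⟨E, heq, hre, him⟩ := exists_resonance_asymptotics ha hc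
  obtain ⟨C, hC, hreC⟩ := hre.exists_pos
  have hneg : ∀ᶠ ε in 𝓝[>] 0, (E ε).im < 0 :=
    eventually_neg_of_add_mul_isLittleO (κ := Real.pi / a ^ 2) (by positivity)
      (eventually_mem_nhdsWithin.mono fun _ (hε : 0 < _) => pow_pos hε 2)
      (by simpa only [mul_div_right_comm] using him)
  obtain ⟨ε₀, hε₀, hsub⟩ :=
    mem_nhdsGT_iff_exists_Ioo_subset.mp (heq.and (hneg.and hreC.bound))
  refine ⟨C, hC, ε₀, hε₀, E, fun ε hpos hlt => ?_, fun δ hδ => ?_⟩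
  · obtain ⟨heq, hneg, hre⟩ := hsub ⟨hpos, hlt⟩
    refine ⟨by exact_mod_cast heq, hneg, ?_⟩
    simpa [mul_assoc] using hre
  · obtain ⟨ε₁, hε₁, hsub₁⟩ := mem_nhdsGT_iff_exists_Ioo_subset.mp (him.bound hδ)
    exact ⟨ε₁, hε₁, fun ε hpos hlt _ => by simpa using hsub₁ ⟨hpos, hlt⟩⟩

theorem log_two_sub_eulerMascheroniConstant_pos :
    0 < Real.log 2 - Real.eulerMascheroniConstant := by
  linarith [Real.eulerMascheroniConstant_lt_two_thirds, Real.log_two_gt_d9]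

/-- d = 2, θ₀ = 0, c < 0: for small ε the analytically continued equation
`Log(1−z)/(4π) − 1/a = −1/(a + cε − ε²(Log z/(4π) − i/4 − 1/a))`
(principal logarithms) has a solution `E_ε^r` with `Im E_ε^r < 0`,
`Re(E_ε^r) = 4π|c|ε/a² + O(ε²|ln ε|)` and `Im(E_ε^r) = −πε²/a² + o(ε²)`. -/
theorem resonance_d2_theta0_zero (a c : ℝ)
    (ha : a = 2 * Real.pi / (Real.log 2 - Real.eulerMascheroniConstant))
    (hc : c < 0) :
    ∃ C > (0 : ℝ), ∃ ε₀ > (0 : ℝ), ∃ E : ℝ → ℂ,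
      (∀ ε : ℝ, 0 < ε → ε < ε₀ →
        Complex.log (1 - E ε) / (4 * Real.pi) - ((1 / a : ℝ) : ℂ) =
          -(1 / (((a + c * ε : ℝ) : ℂ) -
            ((ε : ℂ)) ^ 2 *
              (Complex.log (E ε) / (4 * Real.pi) - Complex.I / 4 - ((1 / a : ℝ) : ℂ)))) ∧
        (E ε).im < 0 ∧
        |(E ε).re - 4 * Real.pi * |c| * ε / a ^ 2| ≤ C * ε ^ 2 * |Real.log ε|) ∧
      (∀ δ > (0 : ℝ), ∃ ε₁ > (0 : ℝ), ∀ ε : ℝ, 0 < ε → ε < ε₁ → ε < ε₀ →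
        |(E ε).im + Real.pi * ε ^ 2 / a ^ 2| ≤ δ * ε ^ 2) := by
  have hpos := log_two_sub_eulerMascheroniConstant_pos
  exact resonance_d2_theta0_zero_general a c (by rw [ha]; positivity) hc
end

section
/- Let a = 2π/(ln 2 − γ), where γ is the Euler–Mascheroni constant, let θ₀ > 0 and c = 0. Then there exist C > 0 and ε₀ > 0 such that for all 0 < ε < ε₀ the equation {a + (aθ₀ − ε²)·(Log z/(4π) − i/4 − 1/a)}·{θ₀ + (aθ₀ − ε²)·(Log(1−z)/(4π) − 1/a)} − ε² = 0, with Log the principal complex logarithm, has a solution E_ε^r with Im(E_ε^r) < 0 satisfying |Re(E_ε^r) − 4πε²/(a²θ₀)| ≤ C·ε²/|ln ε|, and for every δ > 0 there is ε₁ > 0 such that for 0 < ε < ε₁, |Im(E_ε^r) + 4π³ε²/(a²θ₀²(ln ε)²)| ≤ δ·ε²/(ln ε)². -/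
open Complex

open Filter Topology Asymptotics

/-!
Write `s = 1 / ln ε`, `t = ε²` and look for the zero in the form `E = t w`. Since
`log (t w) = 2 / s + log w`, multiplying the open-channel factor by `s` and dividing the
closed-channel factor by `t` turns the equation into `F (s, t, w) = 0`, where `F` is analytic near
`s = t = 0` and affine in `w` at `s = t = 0`, with the simple root `w₀ = 4π / (a²θ₀)`. The implicit
function theorem gives `w = w₀ + O(s)`, hence the real part of `E`.

For the imaginary part, `F = 0` says `log (1 - t w) / t = 4π / (aθ₀ - t) * (s / P - 1 / a)`, where
`P` is the rescaled open-channel factor. As `Im P` is itself proportional to `(aθ₀ - t) s`, taking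
imaginary parts gives exactly `s² (π - arg w) / |P|²`. Replacing the left side by `-w` costs only
`O(t) = o(s²)`, while `arg w → 0` and `P → aθ₀ / 2π`.
-/

theorem exists_implicitFunction_isBigO {𝕜 E : Type*} [NontriviallyNormedField 𝕜] [CompleteSpace 𝕜]
    [NormedAddCommGroup E] [NormedSpace 𝕜 E] [CompleteSpace E]
    {f : E × 𝕜 → 𝕜} {f' : E × 𝕜 →L[𝕜] 𝕜} {u : E × 𝕜} {c : 𝕜} (hf : HasStrictFDerivAt f f' u)
    (hc : HasDerivAt (fun y ↦ f (u.1, y)) c u.2) (hc₀ : c ≠ 0) :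
    ∃ ψ : E → 𝕜, (∀ᶠ x in 𝓝 u.1, f (x, ψ x) = f u) ∧
      (fun x ↦ ψ x - u.2) =O[𝓝 u.1] fun x ↦ x - u.1 := by
  have hpartial : f' ∘L .inr 𝕜 E 𝕜 = .toSpanSingleton 𝕜 c :=
    (HasFDerivAt.comp (f := fun y ↦ (u.1, y)) u.2 hf.hasFDerivAt
      (hasFDerivAt_prodMk_right u.1 u.2)).unique hc.hasFDerivAt
  have hinv : (f' ∘L .inr 𝕜 E 𝕜).IsInvertible :=
    ⟨ContinuousLinearEquiv.unitsEquivAut 𝕜 (Units.mk0 c hc₀), by ext; simp [hpartial]⟩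
  have hψ := (hf.hasStrictFDerivAt_implicitFunctionOfProdDomain hinv).hasFDerivAt
  have hψu : hf.implicitFunctionOfProdDomain hinv u.1 = u.2 :=
    tendsto_nhds_unique hψ.continuousAt.tendsto (hf.tendsto_implicitFunctionOfProdDomain hinv)
  exact ⟨_, hf.eventually_apply_implicitFunctionOfProdDomain hinv,
    by simpa [hψu] using hψ.isBigO_sub⟩

theorem eulerMascheroniConstant_lt_log_two : Real.eulerMascheroniConstant < Real.log 2 :=
  Real.eulerMascheroniConstant_lt_two_thirds.trans (by linarith [Real.log_two_gt_d9])

theorem eventually_neg_of_add_const_mul_isLittleO {ι : Type*} {l : Filter ι} {f g : ι → ℝ} {κ : ℝ}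
    (h : (fun i ↦ f i + κ * g i) =o[l] g) (hκ : 0 < κ) (hg : ∀ᶠ i in l, 0 < g i) :
    ∀ᶠ i in l, f i < 0 := by
  filter_upwards [h.bound (half_pos hκ), hg] with i hi hgi
  rw [Real.norm_eq_abs, Real.norm_of_nonneg hgi.le] at hi
  nlinarith [le_of_abs_le hi, mul_pos hκ hgi]

theorem eventually_log_ne_zero_nhdsGT_zero : ∀ᶠ ε : ℝ in 𝓝[>] 0, Real.log ε ≠ 0 :=
  (Real.tendsto_log_nhdsGT_zero.eventually_lt_atBot 0).mono fun _ ↦ ne_of_lt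

theorem tendsto_inv_log_nhdsGT_zero : Tendsto (fun ε ↦ (Real.log ε)⁻¹) (𝓝[>] 0) (𝓝 0) :=
  tendsto_inv_atBot_zero.comp Real.tendsto_log_nhdsGT_zero

theorem sq_isLittleO_inv_log_sq :
    (fun ε : ℝ ↦ ε ^ 2) =o[𝓝[>] 0] fun ε ↦ (Real.log ε)⁻¹ ^ 2 := by
  have h : Tendsto (fun ε : ℝ ↦ (Real.log ε * ε) ^ 2) (𝓝[>] 0) (𝓝 0) := by
    simpa using (tendsto_log_mul_rpow_nhdsGT_zero one_pos).pow 2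
  rw [isLittleO_iff_tendsto' (eventually_log_ne_zero_nhdsGT_zero.mono fun ε hε h0 ↦ by simp_all)]
  exact h.congr fun ε ↦ by simp [mul_pow, mul_comm]

theorem tendsto_pi_sub_arg_div_normSq {ι : Type*} {l : Filter ι} {w z : ι → ℂ} {w₀ z₀ : ℝ}
    (hw₀ : 0 < w₀) (hz₀ : z₀ ≠ 0) (hw : Tendsto w l (𝓝 w₀)) (hz : Tendsto z l (𝓝 z₀)) :
    Tendsto (fun i ↦ (Real.pi - arg (w i)) / normSq (z i)) l (𝓝 (Real.pi / z₀ ^ 2)) := by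
  have harg : Tendsto (fun i ↦ arg (w i)) l (𝓝 0) := by
    rw [← arg_ofReal_of_nonneg hw₀.le]
    exact (continuousAt_arg (ofReal_mem_slitPlane.mpr hw₀)).tendsto.comp hw
  have hnormSq : Tendsto (fun i ↦ normSq (z i)) l (𝓝 (z₀ ^ 2)) := by
    rw [sq, ← normSq_ofReal]
    exact (continuous_normSq.tendsto _).comp hz
  simpa only [sub_zero] using! (harg.const_sub Real.pi).div hnormSq (pow_ne_zero 2 hz₀)

/-- The function `log (1 - z) / z`, extended analytically to `z = 0`; with it the logarithm of the
closed channel can be divided by the small parameter. -/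
noncomputable def logOneSubSlope : ℂ → ℂ :=
  dslope (fun z ↦ log (1 - z)) 0

theorem mul_logOneSubSlope (z : ℂ) : z * logOneSubSlope z = log (1 - z) := by
  simpa [logOneSubSlope] using sub_smul_dslope (fun z ↦ log (1 - z)) 0 z

theorem logOneSubSlope_zero : logOneSubSlope 0 = -1 := by
  have h : HasDerivAt (fun z : ℂ ↦ log (1 - z)) (-1) 0 := by
    simpa using ((hasDerivAt_id (0 : ℂ)).const_sub 1).clog (by simp)
  rw [logOneSubSlope, dslope_same, h.deriv]

theorem analyticAt_logOneSubSlope : AnalyticAt ℂ logOneSubSlope 0 := by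
  obtain ⟨p, hp⟩ : AnalyticAt ℂ (fun z ↦ log (1 - z)) 0 :=
    (analyticAt_const.sub analyticAt_id).clog (by simp)
  exact hp.has_fpower_series_dslope_fslope.analyticAt

theorem mul_logOneSubSlope_add_self_isBigO {ι : Type*} {l : Filter ι} {t w : ι → ℂ}
    (ht : Tendsto t l (𝓝 0)) (hw : w =O[l] fun _ ↦ (1 : ℝ)) :
    (fun i ↦ w i * logOneSubSlope (t i * w i) + w i) =O[l] t := by
  have htw : (fun i ↦ t i * w i) =O[l] t := by
    simpa using (isBigO_refl t l).norm_right.mul hw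
  have hslope : (fun i ↦ logOneSubSlope (t i * w i) + 1) =O[l] t := by
    have h := analyticAt_logOneSubSlope.differentiableAt.isBigO_sub
    simp only [logOneSubSlope_zero, sub_neg_eq_add, sub_zero] at h
    exact (h.comp_tendsto (htw.trans_tendsto ht)).trans htw
  simpa [mul_add_one] using hw.mul hslope.norm_right

/-- The factor `a + (aθ - t) g(z)` of the resolvent denominator coming from the open channel, whose
threshold is `z = 0`; here `g(z) = log z / (4π) - i / 4 - 1 / a`, the principal logarithm giving the
continuation to the unphysical sheet just below the positive real axis. -/
noncomputable def openChannelFactor (a θ t : ℝ) (z : ℂ) : ℂ :=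
  (a : ℂ) + ((a * θ - t : ℝ) : ℂ) *
    (log z / (4 * Real.pi) - I / 4 - ((1 / a : ℝ) : ℂ))

/-- The factor `θ + (aθ - t) g(z - 1)` of the resolvent denominator coming from the closed channel,
whose threshold is `z = 1`; below it `g(z - 1) = log (1 - z) / (4π) - 1 / a`. -/
noncomputable def closedChannelFactor (a θ t : ℝ) (z : ℂ) : ℂ :=
  (θ : ℂ) + ((a * θ - t : ℝ) : ℂ) * (log (1 - z) / (4 * Real.pi) - ((1 / a : ℝ) : ℂ))

/-- The resolvent denominator `D_ε(z)` at `c = 0`, whose zeros are the resonances; both factors take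
`t = ε ^ 2`. -/
noncomputable def resolventDenominator (a θ ε : ℝ) (z : ℂ) : ℂ :=
  openChannelFactor a θ (ε ^ 2) z * closedChannelFactor a θ (ε ^ 2) z - (ε : ℂ) ^ 2

/-- The open-channel factor at `z = t w`, multiplied by `s`. The substitution
`log (t w) = 2 / s + log w`, valid for `s = 1 / ln ε` and `t = ε ^ 2`, makes it regular at
`s = 0`. -/
noncomputable def rescaledOpenFactor (a θ : ℝ) (s t w : ℂ) : ℂ :=
  s * a + (a * θ - t) * (1 / (2 * Real.pi) + s * (log w / (4 * Real.pi) - I / 4 - 1 / a))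

/-- The closed-channel factor at `z = t w`, divided by `t` and extended to `t = 0`. -/
noncomputable def rescaledClosedFactor (a θ : ℝ) (t w : ℂ) : ℂ :=
  1 / a + (a * θ - t) / (4 * Real.pi) * (w * logOneSubSlope (t * w))

/-- The product of the rescaled factors minus `s`, which is `s / t` times the resolvent denominator
at `z = t w` when `s = 1 / ln ε` and `t = ε ^ 2`, and is regular at `s = t = 0`. -/
noncomputable def rescaledDenominator (a θ : ℝ) (s t w : ℂ) : ℂ :=
  rescaledOpenFactor a θ s t w * rescaledClosedFactor a θ t w - s

section ResolventDenominator

variable {a θ : ℝ}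

theorem openChannelFactor_sq_mul {ε : ℝ} {w : ℂ} (hε : 0 < ε) (hlog : Real.log ε ≠ 0)
    (hw : w ≠ 0) :
    openChannelFactor a θ (ε ^ 2) (ε ^ 2 * w) =
      Real.log ε * rescaledOpenFactor a θ ↑(Real.log ε)⁻¹ ↑(ε ^ 2) w := by
  have hlog' : (Real.log ε : ℂ) ≠ 0 := ofReal_ne_zero.mpr hlog
  have hsplit : log (ε ^ 2 * w) = 2 * Real.log ε + log w := by
    simpa using log_ofReal_mul (pow_pos hε 2) hw
  simp only [openChannelFactor, rescaledOpenFactor, hsplit]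
  push_cast
  field_simp
  ring

theorem closedChannelFactor_mul (ha : a ≠ 0) (t : ℝ) (w : ℂ) :
    closedChannelFactor a θ t (t * w) = t * rescaledClosedFactor a θ t w := by
  have ha' : (a : ℂ) ≠ 0 := ofReal_ne_zero.mpr ha
  simp only [closedChannelFactor, rescaledClosedFactor, ← mul_logOneSubSlope]
  push_cast
  field_simp
  ring

theorem resolventDenominator_sq_mul {ε : ℝ} {w : ℂ} (ha : a ≠ 0) (hε : 0 < ε)
    (hlog : Real.log ε ≠ 0) (hw : w ≠ 0) :
    resolventDenominator a θ ε (ε ^ 2 * w) =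
      ε ^ 2 * Real.log ε * rescaledDenominator a θ ↑(Real.log ε)⁻¹ ↑(ε ^ 2) w := by
  have hlog' : (Real.log ε : ℂ) ≠ 0 := ofReal_ne_zero.mpr hlog
  have hclosed := closedChannelFactor_mul (θ := θ) ha (ε ^ 2) w
  rw [ofReal_pow] at hclosed
  rw [resolventDenominator, rescaledDenominator, openChannelFactor_sq_mul hε hlog hw, ofReal_pow,
    hclosed, ofReal_inv]
  field_simp

theorem contDiffAt_rescaledOpenFactor {n : WithTop ℕ∞} {w : ℂ} (s t : ℂ) (hw : w ∈ slitPlane) :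
    ContDiffAt ℂ n (fun v : (ℂ × ℂ) × ℂ ↦ rescaledOpenFactor a θ v.1.1 v.1.2 v.2) ((s, t), w) := by
  have hlog : ContDiffAt ℂ n (fun v : (ℂ × ℂ) × ℂ ↦ log v.2) ((s, t), w) :=
    (analyticAt_snd.clog hw).contDiffAt
  simp only [rescaledOpenFactor, div_eq_mul_inv]
  fun_prop

theorem contDiffAt_rescaledDenominator {n : WithTop ℕ∞} {w : ℂ} (s : ℂ) (hw : w ∈ slitPlane) :
    ContDiffAt ℂ n (fun v : (ℂ × ℂ) × ℂ ↦ rescaledDenominator a θ v.1.1 v.1.2 v.2)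
      ((s, 0), w) := by
  have hopen := contDiffAt_rescaledOpenFactor (n := n) (a := a) (θ := θ) s 0 hw
  have hslope : ContDiffAt ℂ n (fun v : (ℂ × ℂ) × ℂ ↦ logOneSubSlope (v.1.2 * v.2))
      ((s, 0), w) :=
    ContDiffAt.comp _ (by rw [zero_mul]; exact analyticAt_logOneSubSlope.contDiffAt) (by fun_prop)
  simp only [rescaledDenominator, rescaledClosedFactor, div_eq_mul_inv]
  fun_prop

theorem rescaledOpenFactor_zero_zero (w : ℂ) :
    rescaledOpenFactor a θ 0 0 w = ((a * θ / (2 * Real.pi) : ℝ) : ℂ) := by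
  simp only [rescaledOpenFactor]
  push_cast
  ring

theorem rescaledDenominator_zero_zero (w : ℂ) :
    rescaledDenominator a θ 0 0 w =
      a * θ / (2 * Real.pi) * (1 / a - a * θ / (4 * Real.pi) * w) := by
  rw [rescaledDenominator, rescaledOpenFactor_zero_zero, rescaledClosedFactor, zero_mul,
    logOneSubSlope_zero]
  push_cast
  ring

theorem exists_rescaledDenominator_eq_zero (ha : a ≠ 0) (hθ : 0 < θ) :
    ∃ ψ : ℂ × ℂ → ℂ, (∀ᶠ p in 𝓝 0, rescaledDenominator a θ p.1 p.2 (ψ p) = 0) ∧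
      (fun p ↦ ψ p - ((4 * Real.pi / (a ^ 2 * θ) : ℝ) : ℂ)) =O[𝓝 0] fun p ↦ p := by
  have ha' : (a : ℂ) ≠ 0 := ofReal_ne_zero.mpr ha
  have hθ' : (θ : ℂ) ≠ 0 := ofReal_ne_zero.mpr hθ.ne'
  have hπ : (Real.pi : ℂ) ≠ 0 := ofReal_ne_zero.mpr Real.pi_ne_zero
  set w₀ : ℝ := 4 * Real.pi / (a ^ 2 * θ) with hw₀
  have hw₀pos : 0 < w₀ := by positivity
  have hstrict := (contDiffAt_rescaledDenominator (n := 1) (a := a) (θ := θ) 0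
    (ofReal_mem_slitPlane.mpr hw₀pos)).hasStrictFDerivAt one_ne_zero
  have hderiv : HasDerivAt (fun w ↦ rescaledDenominator a θ 0 0 w)
      (-(a * θ / (2 * Real.pi) * (a * θ / (4 * Real.pi)))) w₀ := by
    simp only [rescaledDenominator_zero_zero]
    simpa using (((hasDerivAt_id (w₀ : ℂ)).const_mul _).const_sub _).const_mul _
  have hzero : rescaledDenominator a θ 0 0 w₀ = 0 := by
    rw [rescaledDenominator_zero_zero, hw₀]
    push_cast
    field_simp
    ring
  obtain ⟨ψ, hψ, hψO⟩ := exists_implicitFunction_isBigO hstrict hderiv (by simp [ha', hθ', hπ])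
  exact ⟨ψ, hψ.mono fun p hp ↦ hp.trans hzero, by simpa [← Prod.zero_eq_mk] using hψO⟩

theorem im_rescaledOpenFactor (s t : ℝ) (w : ℂ) :
    (rescaledOpenFactor a θ s t w).im = (a * θ - t) * s * ((arg w - Real.pi) / (4 * Real.pi)) := by
  have hreal : rescaledOpenFactor a θ s t w = ((s * a : ℝ) : ℂ) + ((a * θ - t : ℝ) : ℂ) *
      (((1 / (2 * Real.pi) - s / a : ℝ) : ℂ) + (s : ℂ) *
        (log w / ((4 * Real.pi : ℝ) : ℂ) - ((1 / 4 : ℝ) : ℂ) * I)) := by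
    simp only [rescaledOpenFactor]
    push_cast
    ring
  rw [hreal]
  simp only [add_im, ofReal_im, im_ofReal_mul, sub_im, div_ofReal_im, log_im, I_im]
  field_simp
  ring

theorem im_mul_logOneSubSlope {s t : ℝ} {w : ℂ} (ht : a * θ - t ≠ 0)
    (hopen : rescaledOpenFactor a θ s t w ≠ 0) (hzero : rescaledDenominator a θ s t w = 0) :
    (w * logOneSubSlope (t * w)).im =
      s ^ 2 * ((Real.pi - arg w) / normSq (rescaledOpenFactor a θ s t w)) := by
  have ht' : (a : ℂ) * θ - t ≠ 0 := by exact_mod_cast ht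
  have hπ : (Real.pi : ℂ) ≠ 0 := ofReal_ne_zero.mpr Real.pi_ne_zero
  have hclosed : rescaledClosedFactor a θ t w = s * (rescaledOpenFactor a θ s t w)⁻¹ := by
    rw [eq_mul_inv_iff_mul_eq₀ hopen, mul_comm]
    exact sub_eq_zero.mp hzero
  have hsolve : w * logOneSubSlope (t * w) = ((4 * Real.pi / (a * θ - t) : ℝ) : ℂ) *
      (s * (rescaledOpenFactor a θ s t w)⁻¹ - ((1 / a : ℝ) : ℂ)) := by
    rw [← hclosed, rescaledClosedFactor]
    push_cast
    generalize w * logOneSubSlope (t * w) = x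
    field_simp
    ring
  rw [hsolve]
  simp only [im_ofReal_mul, sub_im, ofReal_im, inv_im, im_rescaledOpenFactor]
  field_simp
  ring

theorem tendsto_rescaledOpenFactor {ι : Type*} {l : Filter ι} {s t w : ι → ℂ} {w₀ : ℂ}
    (hs : Tendsto s l (𝓝 0)) (ht : Tendsto t l (𝓝 0)) (hw : Tendsto w l (𝓝 w₀))
    (hw₀ : w₀ ∈ slitPlane) :
    Tendsto (fun i ↦ rescaledOpenFactor a θ (s i) (t i) (w i)) l
      (𝓝 ((a * θ / (2 * Real.pi) : ℝ) : ℂ)) := by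
  have hcont : ContinuousAt (fun v : (ℂ × ℂ) × ℂ ↦ rescaledOpenFactor a θ v.1.1 v.1.2 v.2)
      ((0, 0), w₀) := (contDiffAt_rescaledOpenFactor (n := 0) 0 0 hw₀).continuousAt
  rw [← rescaledOpenFactor_zero_zero w₀]
  exact hcont.tendsto.comp ((hs.prodMk_nhds ht).prodMk_nhds hw)

theorem im_add_isLittleO_of_rescaledDenominator_eq_zero {ι : Type*} {l : Filter ι}
    {s t : ι → ℝ} {w : ι → ℂ} {w₀ : ℝ} (ha : a ≠ 0) (hθ : θ ≠ 0) (hw₀ : 0 < w₀)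
    (hs : Tendsto s l (𝓝 0)) (hts : t =o[l] fun i ↦ s i ^ 2) (hw : Tendsto w l (𝓝 w₀))
    (hzero : ∀ᶠ i in l, rescaledDenominator a θ (s i) (t i) (w i) = 0) :
    (fun i ↦ (w i).im + 4 * Real.pi ^ 3 / (a ^ 2 * θ ^ 2) * s i ^ 2) =o[l] fun i ↦ s i ^ 2 := by
  have ht : Tendsto t l (𝓝 0) := hts.isBigO.trans_tendsto (by simpa using hs.pow 2)
  have htC : Tendsto (fun i ↦ (t i : ℂ)) l (𝓝 0) := mod_cast ht.ofReal
  have hopen := tendsto_rescaledOpenFactor (a := a) (θ := θ) (mod_cast hs.ofReal) htC hw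
    (ofReal_mem_slitPlane.mpr hw₀)
  have hopen₀ : a * θ / (2 * Real.pi) ≠ 0 := by positivity
  have hcoeff := tendsto_pi_sub_arg_div_normSq hw₀ hopen₀ hw hopen
  have hlimit : Real.pi / (a * θ / (2 * Real.pi)) ^ 2 = 4 * Real.pi ^ 3 / (a ^ 2 * θ ^ 2) := by
    field_simp
    ring
  rw [hlimit] at hcoeff
  have hmain : (fun i ↦ s i ^ 2 * ((Real.pi - arg (w i)) /
      normSq (rescaledOpenFactor a θ (s i) (t i) (w i)) -
        4 * Real.pi ^ 3 / (a ^ 2 * θ ^ 2))) =o[l] fun i ↦ s i ^ 2 := by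
    simpa using (isBigO_refl (fun i ↦ s i ^ 2) l).mul_isLittleO
      ((isLittleO_one_iff ℝ).mpr (tendsto_sub_nhds_zero_iff.mpr hcoeff))
  have herror : (fun i ↦ (w i * logOneSubSlope (t i * w i) + w i).im) =o[l] fun i ↦ s i ^ 2 := by
    have hO := mul_logOneSubSlope_add_self_isBigO htC (hw.isBigO_one ℝ)
    exact (isBigO_of_le l fun i ↦ abs_im_le_norm _).trans_isLittleO
      (hO.trans_isLittleO (isLittleO_ofReal_left.mpr hts))
  have hN : ∀ᶠ i in l, a * θ - t i ≠ 0 :=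
    (ht.const_sub (a * θ)).eventually_ne (by rw [sub_zero]; positivity)
  refine (herror.sub hmain).congr' ?_ .rfl
  filter_upwards [hzero, hN, hopen.eventually_ne (ofReal_ne_zero.mpr hopen₀)]
    with i hi hNi hopeni
  rw [add_im, im_mul_logOneSubSlope hNi hopeni hi]
  ring

theorem exists_rescaled_resonance (ha : a ≠ 0) (hθ : 0 < θ) : ∃ w : ℝ → ℂ,
    (∀ᶠ ε in 𝓝[>] 0, rescaledDenominator a θ ↑(Real.log ε)⁻¹ ↑(ε ^ 2) (w ε) = 0) ∧
    (fun ε ↦ w ε - ((4 * Real.pi / (a ^ 2 * θ) : ℝ) : ℂ)) =O[𝓝[>] 0]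
      fun ε ↦ (Real.log ε)⁻¹ := by
  obtain ⟨ψ, hψ, hψO⟩ := exists_rescaledDenominator_eq_zero ha hθ
  have hs := tendsto_inv_log_nhdsGT_zero
  have hsq : (fun ε ↦ (Real.log ε)⁻¹ ^ 2) =O[𝓝[>] 0] fun ε ↦ (Real.log ε)⁻¹ := by
    simpa [sq] using (isBigO_refl (fun ε ↦ (Real.log ε)⁻¹) _).mul (hs.isBigO_one ℝ)
  have hpO : (fun ε : ℝ ↦ ((((Real.log ε)⁻¹ : ℝ) : ℂ), ((ε ^ 2 : ℝ) : ℂ))) =O[𝓝[>] 0]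
      fun ε ↦ (Real.log ε)⁻¹ :=
    (isBigO_ofReal_left.mpr (isBigO_refl _ _)).prod_left
      (isBigO_ofReal_left.mpr (sq_isLittleO_inv_log_sq.isBigO.trans hsq))
  have hp := hpO.trans_tendsto hs
  exact ⟨_, hp.eventually hψ, (hψO.comp_tendsto hp).trans hpO⟩

theorem exists_resonance (ha : a ≠ 0) (hθ : 0 < θ) : ∃ E : ℝ → ℂ,
    (∀ᶠ ε in 𝓝[>] 0, resolventDenominator a θ ε (E ε) = 0) ∧
    (fun ε ↦ (E ε).re - 4 * Real.pi * ε ^ 2 / (a ^ 2 * θ)) =O[𝓝[>] 0]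
      (fun ε ↦ ε ^ 2 / |Real.log ε|) ∧
    (fun ε ↦ (E ε).im + 4 * Real.pi ^ 3 * ε ^ 2 / (a ^ 2 * θ ^ 2 * Real.log ε ^ 2)) =o[𝓝[>] 0]
      fun ε ↦ ε ^ 2 / Real.log ε ^ 2 := by
  obtain ⟨w, hzero, hwO⟩ := exists_rescaled_resonance ha hθ
  set w₀ : ℝ := 4 * Real.pi / (a ^ 2 * θ) with hw₀_def
  have hw₀ : 0 < w₀ := by positivity
  have hs := tendsto_inv_log_nhdsGT_zero
  have hw := tendsto_sub_nhds_zero_iff.mp (hwO.trans_tendsto hs)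
  have hre : (fun ε ↦ (w ε - w₀).re) =O[𝓝[>] 0] fun ε ↦ |(Real.log ε)⁻¹| :=
    ((isBigO_of_le _ fun ε ↦ abs_re_le_norm _).trans hwO).norm_right
  have him := im_add_isLittleO_of_rescaledDenominator_eq_zero ha hθ.ne' hw₀ hs
    sq_isLittleO_inv_log_sq hw hzero
  refine ⟨fun ε ↦ ↑(ε ^ 2) * w ε, ?_, ?_, ?_⟩
  · filter_upwards [hzero, eventually_log_ne_zero_nhdsGT_zero,
      hw.eventually_ne (ofReal_ne_zero.mpr hw₀.ne'), self_mem_nhdsWithin] with ε hzeroε hlog hwε hε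
    rw [ofReal_pow, resolventDenominator_sq_mul ha hε hlog hwε, hzeroε, mul_zero]
  · refine ((isBigO_refl (fun ε : ℝ ↦ ε ^ 2) _).mul hre).congr (fun ε ↦ ?_) fun ε ↦ ?_
    · rw [re_ofReal_mul, sub_re, ofReal_re, hw₀_def]
      ring
    · rw [abs_inv, div_eq_mul_inv]
  · refine ((isBigO_refl (fun ε : ℝ ↦ ε ^ 2) _).mul_isLittleO him).congr (fun ε ↦ ?_) fun ε ↦ ?_
    · rw [im_ofReal_mul]
      ring
    · rw [inv_pow, div_eq_mul_inv]

end ResolventDenominator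

theorem resonance_d2_offdiagonal_general {a θ₀ : ℝ} (ha : a ≠ 0) (hθ : 0 < θ₀) :
    ∃ C > (0 : ℝ), ∃ ε₀ > (0 : ℝ), ∃ E : ℝ → ℂ,
      (∀ ε : ℝ, 0 < ε → ε < ε₀ →
        resolventDenominator a θ₀ ε (E ε) = 0 ∧ (E ε).im < 0 ∧
        |(E ε).re - 4 * Real.pi * ε ^ 2 / (a ^ 2 * θ₀)| ≤ C * ε ^ 2 / |Real.log ε|) ∧
      (∀ δ > (0 : ℝ), ∃ ε₁ > (0 : ℝ), ∀ ε : ℝ, 0 < ε → ε < ε₁ → ε < ε₀ →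
        |(E ε).im + 4 * Real.pi ^ 3 * ε ^ 2 / (a ^ 2 * θ₀ ^ 2 * (Real.log ε) ^ 2)| ≤
          δ * ε ^ 2 / (Real.log ε) ^ 2) := by
  obtain ⟨E, hzero, hre, him⟩ := exists_resonance ha hθ
  obtain ⟨C, hC, hreC⟩ := hre.exists_pos
  have hpos : ∀ᶠ ε in 𝓝[>] (0 : ℝ), 0 < ε ^ 2 / Real.log ε ^ 2 := by
    filter_upwards [self_mem_nhdsWithin, Real.tendsto_log_nhdsGT_zero.eventually_lt_atBot 0]
      with ε hε hlog
    exact div_pos (pow_pos hε 2) (sq_pos_of_neg hlog)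
  have hneg : ∀ᶠ ε in 𝓝[>] 0, (E ε).im < 0 :=
    eventually_neg_of_add_const_mul_isLittleO (κ := 4 * Real.pi ^ 3 / (a ^ 2 * θ₀ ^ 2))
      (him.congr_left fun ε ↦ by ring) (by positivity) hpos
  obtain ⟨ε₀, hε₀, hsmall⟩ := mem_nhdsGT_iff_exists_Ioo_subset.mp
    (hzero.and (hneg.and hreC.bound))
  refine ⟨C, hC, ε₀, hε₀, E, fun ε hε hlt ↦ ?_, fun δ hδ ↦ ?_⟩
  · obtain ⟨hzeroε, hnegε, hreε⟩ := hsmall ⟨hε, hlt⟩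
    refine ⟨hzeroε, hnegε, ?_⟩
    rwa [Real.norm_eq_abs, Real.norm_of_nonneg (by positivity), ← mul_div_assoc] at hreε
  · obtain ⟨ε₁, hε₁, hsmall₁⟩ := mem_nhdsGT_iff_exists_Ioo_subset.mp (him.bound hδ)
    refine ⟨ε₁, hε₁, fun ε hε hlt _ ↦ ?_⟩
    have himε := hsmall₁ ⟨hε, hlt⟩
    rwa [Set.mem_ofPred_eq, Real.norm_eq_abs, Real.norm_of_nonneg (by positivity),
      ← mul_div_assoc] at himε

/-- d = 2, c = 0, θ₀ > 0: for small ε the analytically continued resolvent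
denominator (principal logarithms) has a zero `E_ε^r` with `Im E_ε^r < 0`,
`Re(E_ε^r) = 4πε²/(a²θ₀) + O(ε²/|ln ε|)` and
`Im(E_ε^r) = −4π³ε²/(a²θ₀²(ln ε)²) + o(ε²/(ln ε)²)`. -/
theorem resonance_d2_offdiagonal (a θ₀ : ℝ)
    (ha : a = 2 * Real.pi / (Real.log 2 - Real.eulerMascheroniConstant))
    (hθ : 0 < θ₀) :
    ∃ C > (0 : ℝ), ∃ ε₀ > (0 : ℝ), ∃ E : ℝ → ℂ,
      (∀ ε : ℝ, 0 < ε → ε < ε₀ →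
        (((a : ℝ) : ℂ) +
            ((a * θ₀ - ε ^ 2 : ℝ) : ℂ) *
              (Complex.log (E ε) / (4 * Real.pi) - Complex.I / 4 - ((1 / a : ℝ) : ℂ))) *
          ((θ₀ : ℂ) +
            ((a * θ₀ - ε ^ 2 : ℝ) : ℂ) *
              (Complex.log (1 - E ε) / (4 * Real.pi) - ((1 / a : ℝ) : ℂ))) -
          ((ε : ℂ)) ^ 2 = 0 ∧
        (E ε).im < 0 ∧
        |(E ε).re - 4 * Real.pi * ε ^ 2 / (a ^ 2 * θ₀)| ≤ C * ε ^ 2 / |Real.log ε|) ∧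
      (∀ δ > (0 : ℝ), ∃ ε₁ > (0 : ℝ), ∀ ε : ℝ, 0 < ε → ε < ε₁ → ε < ε₀ →
        |(E ε).im + 4 * Real.pi ^ 3 * ε ^ 2 / (a ^ 2 * θ₀ ^ 2 * (Real.log ε) ^ 2)| ≤
          δ * ε ^ 2 / (Real.log ε) ^ 2) := by
  refine resonance_d2_offdiagonal_general ?_ hθ
  rw [ha]
  exact (div_pos Real.two_pi_pos (sub_pos.mpr eulerMascheroniConstant_lt_log_two)).ne'
end
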